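/- Let V be the 126-dimensional ℂ-vector space of homogeneous polynomials of degree 5 in x_0, x_1, x_2, x_3, x_4, and let σ_1, σ_2, σ_3 act on V by the variable permutations σ_1: x_1 ↔ x_2, σ_2: x_3 ↔ x_4, σ_3: (x_1 x_3)(x_2 x_4), all fixing x_0 (these involutions generate a dihedral group D_4 of order 8). For signs ε_1, ε_3 ∈ {+1, −1}, let V(ε_1, ε_3) = { F ∈ V : σ_1·F = ε_1 F, σ_2·F = ε_1 F, σ_3·F = ε_3 F }. Then dim V(+1,+1) = 27, dim V(−1,+1) = 9, dim V(+1,−1) = 23, and dim V(−1,−1) = 7 (so that the isotypic component of the unique 2-dimensional irreducible representation of D_4 has dimension 126 − 66 = 60, i.e. multiplicity 30). -/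

import Mathlib

/-!
Comparing coefficients, a form lies in `V(ε₁, ε₃)` iff its coefficient function
`(a, b, c, d, e) ↦ φ a b c d e` is supported on exponents of sum 5 and
`φ a c b d e = ε₁ φ a b c d e`, `φ a b c e d = ε₁ φ a b c d e`,
`φ a d e b c = ε₃ φ a b c d e`.
Such a function is determined by its values on the sorted exponents
`b ≤ c`, `d ≤ e`, `(b, c) ≤ (d, e)` (lexicographically), where an inequality is strict whenever the
corresponding sign is `-1`; conversely every function on these sorted exponents extends.
Both directions use the factor `sortSign ε x y` picked up when a pair `(x, y)` is sorted.
So the dimension is the number of such sorted exponents (`finrank_Vsp`), which is computed.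
-/

open MvPolynomial

/-- The endomorphism of the polynomial ring `ℂ[x_0,…,x_4]` induced by a permutation of
the variables. -/
noncomputable def renameEnd (π : Equiv.Perm (Fin 5)) :
    Module.End ℂ (MvPolynomial (Fin 5) ℂ) :=
  (rename (π : Fin 5 → Fin 5)).toLinearMap

/-- `V(ε₁, ε₃)`: the space of quintic forms `F` in `x_0,…,x_4` with
`σ₁·F = ε₁ F`, `σ₂·F = ε₁ F` and `σ₃·F = ε₃ F`, where `σ₁ : x_1 ↔ x_2`,
`σ₂ : x_3 ↔ x_4` and `σ₃ = (x_1 x_3)(x_2 x_4)`. -/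
noncomputable def Vsp (ε₁ ε₃ : ℂ) : Submodule ℂ (MvPolynomial (Fin 5) ℂ) :=
  homogeneousSubmodule (Fin 5) ℂ 5 ⊓
    Module.End.eigenspace (renameEnd (Equiv.swap 1 2)) ε₁ ⊓
    Module.End.eigenspace (renameEnd (Equiv.swap 3 4)) ε₁ ⊓
    Module.End.eigenspace (renameEnd (Equiv.swap 1 3 * Equiv.swap 2 4)) ε₃

/-! ### Membership in terms of coefficients -/

/-- The exponent of `x_0^a x_1^b x_2^c x_3^d x_4^e`. -/
noncomputable def expo (a b c d e : ℕ) : Fin 5 →₀ ℕ :=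
  Finsupp.equivFunOnFinite.symm ![a, b, c, d, e]

lemma eq_expo (m : Fin 5 →₀ ℕ) : m = expo (m 0) (m 1) (m 2) (m 3) (m 4) := by
  ext i; fin_cases i <;> rfl

lemma degree_expo (a b c d e : ℕ) : (expo a b c d e).degree = a + b + c + d + e := by
  simp [Finsupp.degree_eq_sum, expo, Fin.sum_univ_five]

/-- The eigenvalue equation for a permutation of variables, read off on coefficients. -/
lemma mem_eigenspace_renameEnd {π : Equiv.Perm (Fin 5)} {ε : ℂ} {F : MvPolynomial (Fin 5) ℂ} :
    F ∈ Module.End.eigenspace (renameEnd π) ε ↔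
      ∀ m, coeff (m.mapDomain π.symm) F = ε * coeff m F := by
  rw [Module.End.mem_eigenspace_iff, MvPolynomial.ext_iff]
  refine forall_congr' fun m => ?_
  have h : m = (m.mapDomain π.symm).mapDomain π := by
    rw [← Finsupp.mapDomain_comp]; simp
  have h2 : coeff m (renameEnd π F) = coeff (m.mapDomain π.symm) F := by
    conv_lhs => rw [h]
    exact coeff_rename_mapDomain _ π.injective _ _
  rw [h2, coeff_smul, smul_eq_mul]

lemma mapDomain_symm_eq (π : Equiv.Perm (Fin 5)) (m : Fin 5 →₀ ℕ) :
    m.mapDomain π.symm = expo (m (π 0)) (m (π 1)) (m (π 2)) (m (π 3)) (m (π 4)) := by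
  rw [← Finsupp.equivMapDomain_eq_mapDomain, eq_expo (Finsupp.equivMapDomain _ _)]
  simp [Finsupp.equivMapDomain_apply]

lemma forall_expo {P : (Fin 5 →₀ ℕ) → Prop} : (∀ m, P m) ↔ ∀ a b c d e, P (expo a b c d e) :=
  ⟨fun h _ _ _ _ _ => h _, fun h m => eq_expo m ▸ h _ _ _ _ _⟩

lemma mem_Vsp {ε₁ ε₃ : ℂ} {F : MvPolynomial (Fin 5) ℂ} : F ∈ Vsp ε₁ ε₃ ↔
    (∀ a b c d e, a + b + c + d + e ≠ 5 → coeff (expo a b c d e) F = 0) ∧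
    (∀ a b c d e, coeff (expo a c b d e) F = ε₁ * coeff (expo a b c d e) F) ∧
    (∀ a b c d e, coeff (expo a b c e d) F = ε₁ * coeff (expo a b c d e) F) ∧
    (∀ a b c d e, coeff (expo a d e b c) F = ε₃ * coeff (expo a b c d e) F) := by
  have h0 : F ∈ homogeneousSubmodule (Fin 5) ℂ 5 ↔
      ∀ m : Fin 5 →₀ ℕ, m.degree ≠ 5 → coeff m F = 0 := by
    rw [mem_homogeneousSubmodule]
    refine ⟨fun h m hm => h.coeff_eq_zero hm, fun h m hm => ?_⟩
    have h5 : m.degree = 5 := by_contra fun h' => hm (h m h')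
    rw [Finsupp.degree_eq_weight_one] at h5
    exact h5
  simp only [Vsp, Submodule.mem_inf, h0, mem_eigenspace_renameEnd, mapDomain_symm_eq]
  rw [forall_expo, forall_expo, forall_expo, forall_expo]
  simp only [degree_expo, and_assoc]
  rfl

/-! ### Sorting pairs with signs -/

/-- The factor relating `f x y` to its value on the sorted pair when `f y x = ε * f x y`
with `ε = ±1`; on the diagonal it is `1` for `ε = 1` and `0` for `ε = -1`. -/
noncomputable def sortSign {α : Type*} [LinearOrder α] (ε : ℂ) (x y : α) : ℂ :=
  if x < y then 1 else if y < x then ε else (1 + ε) / 2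

lemma sortSign_comm {α : Type*} [LinearOrder α] {ε : ℂ} (hε : ε = 1 ∨ ε = -1) (x y : α) :
    sortSign ε y x = ε * sortSign ε x y := by
  rcases lt_trichotomy x y with h | h | h <;> rcases hε with rfl | rfl <;>
    simp [sortSign, h, h.not_gt]

lemma eq_sortSign_mul {α : Type*} [LinearOrder α] {ε : ℂ} (hε : ε = 1 ∨ ε = -1)
    {f : α → α → ℂ} (hf : ∀ x y, f y x = ε * f x y) (x y : α) :
    f x y = sortSign ε x y * f (min x y) (max x y) := by
  rcases lt_trichotomy x y with h | rfl | h
  · simp [sortSign, h, h.le]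
  · have := hf x x
    rcases hε with rfl | rfl
    · simp [sortSign]
    · have : f x x = 0 := by linear_combination this / 2
      simp [this]
  · simp [sortSign, h, h.le, h.not_gt, ← hf y x]

/-- `x ≤ y`, strictly if the sign (encoded as `true` for `-1`) is negative. -/
def SignSorted {α : Type*} [LinearOrder α] (s : Bool) (x y : α) : Prop :=
  x < y ∨ (s = false ∧ x = y)

instance {α : Type*} [LinearOrder α] (s : Bool) (x y : α) : Decidable (SignSorted s x y) :=
  inferInstanceAs (Decidable (_ ∨ _))

/-- The complex sign encoded by a Boolean. -/
def sgn (s : Bool) : ℂ := if s then -1 else 1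

lemma sgn_eq (s : Bool) : sgn s = 1 ∨ sgn s = -1 := by cases s <;> simp [sgn]

lemma sortSign_of_sorted {α : Type*} [LinearOrder α] {s : Bool} {x y : α} (h : SignSorted s x y) :
    sortSign (sgn s) x y = 1 := by
  rcases h with h | ⟨rfl, rfl⟩ <;> simp [sortSign, sgn, *]

lemma sorted_of_sortSign_ne_zero {α : Type*} [LinearOrder α] {s : Bool} {x y : α}
    (h : sortSign (sgn s) x y ≠ 0) : SignSorted s (min x y) (max x y) := by
  rcases lt_trichotomy x y with h' | rfl | h'
  · left; simp [h']
  · right; cases s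
    · simp
    · simp [sortSign, sgn] at h
  · left; simp [h']

lemma SignSorted.min_eq {α : Type*} [LinearOrder α] {s : Bool} {x y : α} (h : SignSorted s x y) :
    min x y = x := by
  rcases h with h | ⟨-, rfl⟩
  · exact min_eq_left h.le
  · exact min_self _

lemma SignSorted.max_eq {α : Type*} [LinearOrder α] {s : Bool} {x y : α} (h : SignSorted s x y) :
    max x y = y := by
  rcases h with h | ⟨-, rfl⟩
  · exact max_eq_right h.le
  · exact max_self _

/-! ### Sorted exponents -/

/-- The sorted pair, in the lexicographic order on pairs. -/
def sortPair (x y : ℕ) : ℕ ×ₗ ℕ := toLex (min x y, max x y)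

lemma sortPair_comm (x y : ℕ) : sortPair y x = sortPair x y := by
  simp [sortPair, min_comm, max_comm]

/-- Sorted exponents of degree 5, encoded as `(a, (b, c), (d, e))`. -/
def IsRep (s t : Bool) (r : ℕ × (ℕ ×ₗ ℕ) × (ℕ ×ₗ ℕ)) : Prop :=
  r.1 + (ofLex r.2.1).1 + (ofLex r.2.1).2 + (ofLex r.2.2).1 + (ofLex r.2.2).2 = 5 ∧
  SignSorted s (ofLex r.2.1).1 (ofLex r.2.1).2 ∧ SignSorted s (ofLex r.2.2).1 (ofLex r.2.2).2 ∧
  SignSorted t r.2.1 r.2.2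

instance (s t : Bool) : DecidablePred (IsRep s t) := fun _ => inferInstanceAs (Decidable (_ ∧ _))

/-- The finite set of sorted exponents of degree 5; these index a basis of `V(ε₁, ε₃)`. -/
def reps (s t : Bool) : Finset (ℕ × (ℕ ×ₗ ℕ) × (ℕ ×ₗ ℕ)) :=
  ((Finset.Nat.antidiagonalTuple 5 5).image
    fun v => (v 0, toLex (v 1, v 2), toLex (v 3, v 4))).filter (IsRep s t)

lemma mem_reps {s t : Bool} {r : ℕ × (ℕ ×ₗ ℕ) × (ℕ ×ₗ ℕ)} : r ∈ reps s t ↔ IsRep s t r := by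
  simp only [reps, Finset.mem_filter, Finset.mem_image, Finset.Nat.mem_antidiagonalTuple,
    and_iff_right_iff_imp]
  intro h
  refine ⟨![r.1, (ofLex r.2.1).1, (ofLex r.2.1).2, (ofLex r.2.2).1, (ofLex r.2.2).2], ?_, rfl⟩
  rw [Fin.sum_univ_five]
  exact h.1

/-- The exponent encoded by `(a, (b, c), (d, e))`. -/
noncomputable def repExpo (r : ℕ × (ℕ ×ₗ ℕ) × (ℕ ×ₗ ℕ)) : Fin 5 →₀ ℕ :=
  expo r.1 (ofLex r.2.1).1 (ofLex r.2.1).2 (ofLex r.2.2).1 (ofLex r.2.2).2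

/-! ### Restriction to sorted exponents and extension from them -/

/-- Restriction of the coefficient function to sorted exponents. -/
noncomputable def restr (s t : Bool) : Vsp (sgn s) (sgn t) →ₗ[ℂ] (reps s t → ℂ) where
  toFun F r := coeff (repExpo r) (F : MvPolynomial (Fin 5) ℂ)
  map_add' F G := by ext; simp
  map_smul' c F := by ext; simp

/-- The total factor picked up when sorting an exponent. -/
noncomputable def totalSign (s t : Bool) (b c d e : ℕ) : ℂ :=
  sortSign (sgn s) b c * sortSign (sgn s) d e * sortSign (sgn t) (sortPair b c) (sortPair d e)

/-- The sorted exponent of a given exponent. -/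
def normalForm (a b c d e : ℕ) : ℕ × (ℕ ×ₗ ℕ) × (ℕ ×ₗ ℕ) :=
  (a, min (sortPair b c) (sortPair d e), max (sortPair b c) (sortPair d e))

/-- Every coefficient is determined by the coefficient at the sorted exponent. -/
lemma coeff_eq {s t : Bool} {F : MvPolynomial (Fin 5) ℂ} (hF : F ∈ Vsp (sgn s) (sgn t))
    (a b c d e : ℕ) :
    coeff (expo a b c d e) F =
      totalSign s t b c d e * coeff (repExpo (normalForm a b c d e)) F := by
  obtain ⟨-, h1, h2, h3⟩ := mem_Vsp.1 hF
  rw [eq_sortSign_mul (sgn_eq s) (f := fun b c => coeff (expo a b c d e) F)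
      (fun b c => h1 a b c d e) b c,
    eq_sortSign_mul (sgn_eq s) (f := fun d e => coeff (expo a (min b c) (max b c) d e) F)
      (fun d e => h2 a _ _ d e) d e]
  have := eq_sortSign_mul (sgn_eq t) (f := fun p q : ℕ ×ₗ ℕ => coeff (repExpo (a, p, q)) F)
      (fun p q => h3 a _ _ _ _) (sortPair b c) (sortPair d e)
  simp only [repExpo, sortPair, ofLex_toLex] at this
  rw [this, totalSign, normalForm]
  simp only [repExpo, sortPair]
  ring

lemma isRep_normalForm {s t : Bool} {a b c d e : ℕ} (hdeg : a + b + c + d + e = 5)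
    (h : totalSign s t b c d e ≠ 0) : IsRep s t (normalForm a b c d e) := by
  simp only [totalSign, ne_eq, mul_eq_zero, not_or] at h
  obtain ⟨⟨h1, h2⟩, h3⟩ := h
  replace h1 := sorted_of_sortSign_ne_zero h1
  replace h2 := sorted_of_sortSign_ne_zero h2
  replace h3 := sorted_of_sortSign_ne_zero h3
  have hbc := min_add_max b c
  have hde := min_add_max d e
  refine ⟨?_, ?_, ?_, h3⟩ <;>
    rcases le_total (sortPair b c) (sortPair d e) with h | h <;>
    simp only [normalForm, min_eq_left h, max_eq_right h, min_eq_right h, max_eq_left h] <;>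
    simp only [sortPair, ofLex_toLex] <;> first | assumption | omega

lemma restr_injective (s t : Bool) : Function.Injective (restr s t) := by
  rw [← LinearMap.ker_eq_bot, LinearMap.ker_eq_bot']
  rintro ⟨F, hF⟩ h0
  rw [Subtype.ext_iff]
  refine MvPolynomial.ext _ _ (forall_expo.2 fun a b c d e => ?_)
  change coeff _ F = 0
  by_cases hdeg : a + b + c + d + e = 5
  · rw [coeff_eq hF]
    by_cases h : totalSign s t b c d e = 0
    · simp [h]
    · have := congrFun h0 ⟨_, mem_reps.2 (isRep_normalForm hdeg h)⟩
      simp only [restr, LinearMap.coe_mk, AddHom.coe_mk, Pi.zero_apply] at this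
      simp [this]
  · exact (mem_Vsp.1 hF).1 _ _ _ _ _ hdeg

/-- The extension of a function on sorted exponents to a coefficient function. -/
noncomputable def extCoeff (s t : Bool) (g : reps s t → ℂ) (a b c d e : ℕ) : ℂ :=
  totalSign s t b c d e *
    if h : normalForm a b c d e ∈ reps s t then g ⟨_, h⟩ else 0

lemma extCoeff_eq_zero {s t : Bool} (g : reps s t → ℂ) {a b c d e : ℕ}
    (hdeg : a + b + c + d + e ≠ 5) : extCoeff s t g a b c d e = 0 := by
  rw [extCoeff, dif_neg, mul_zero]
  intro h
  have h1 := (mem_reps.1 h).1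
  have hbc := min_add_max b c
  have hde := min_add_max d e
  apply hdeg
  rcases le_total (sortPair b c) (sortPair d e) with h | h <;>
    simp only [normalForm, min_eq_left h, max_eq_right h, min_eq_right h, max_eq_left h] at h1 <;>
    simp only [sortPair, ofLex_toLex] at h1 <;> omega

/-- The quintic form with prescribed coefficients on sorted exponents. -/
noncomputable def extForm (s t : Bool) (g : reps s t → ℂ) : MvPolynomial (Fin 5) ℂ :=
  ∑ m ∈ Finset.finsuppAntidiag Finset.univ 5,
    monomial m (extCoeff s t g (m 0) (m 1) (m 2) (m 3) (m 4))

lemma coeff_extForm (s t : Bool) (g : reps s t → ℂ) (a b c d e : ℕ) :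
    coeff (expo a b c d e) (extForm s t g) = extCoeff s t g a b c d e := by
  classical
  simp only [extForm, coeff_sum, coeff_monomial, Finset.sum_ite_eq']
  change (if _ then extCoeff s t g a b c d e else 0) = _
  split_ifs with h
  · rfl
  · refine (extCoeff_eq_zero g fun hdeg => h ?_).symm
    rw [Finset.mem_finsuppAntidiag]
    refine ⟨?_, Finset.subset_univ _⟩
    rw [Fin.sum_univ_five]
    exact hdeg

lemma extForm_mem (s t : Bool) (g : reps s t → ℂ) : extForm s t g ∈ Vsp (sgn s) (sgn t) := by
  rw [mem_Vsp]
  simp only [coeff_extForm]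
  refine ⟨fun a b c d e h => extCoeff_eq_zero g h, fun a b c d e => ?_, fun a b c d e => ?_,
    fun a b c d e => ?_⟩
  · have h : normalForm a c b d e = normalForm a b c d e := by
      simp only [normalForm, sortPair_comm b c]
    simp only [extCoeff, h, totalSign, sortPair_comm b c, sortSign_comm (sgn_eq s) b c]
    ring
  · have h : normalForm a b c e d = normalForm a b c d e := by
      simp only [normalForm, sortPair_comm d e]
    simp only [extCoeff, h, totalSign, sortPair_comm d e, sortSign_comm (sgn_eq s) d e]
    ring
  · have h : normalForm a d e b c = normalForm a b c d e := by
      simp only [normalForm, min_comm, max_comm]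
    simp only [extCoeff, h, totalSign, sortSign_comm (sgn_eq t) (sortPair b c) (sortPair d e)]
    ring

lemma restr_surjective (s t : Bool) : Function.Surjective (restr s t) := by
  intro g
  refine ⟨⟨_, extForm_mem s t g⟩, ?_⟩
  funext ⟨⟨a, p, q⟩, hr⟩
  simp only [restr, LinearMap.coe_mk, AddHom.coe_mk, repExpo]
  rw [coeff_extForm, extCoeff]
  obtain ⟨-, h1, h2, h3⟩ := mem_reps.1 hr
  dsimp only at h1 h2 h3 ⊢
  have hp : sortPair (ofLex p).1 (ofLex p).2 = p := by
    rw [sortPair, h1.min_eq, h1.max_eq]; rfl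
  have hq : sortPair (ofLex q).1 (ofLex q).2 = q := by
    rw [sortPair, h2.min_eq, h2.max_eq]; rfl
  have hn : normalForm a (ofLex p).1 (ofLex p).2 (ofLex q).1 (ofLex q).2 = (a, p, q) := by
    rw [normalForm, hp, hq, h3.min_eq, h3.max_eq]
  simp only [hn, hr, dif_pos, totalSign, hp, hq, sortSign_of_sorted h1, sortSign_of_sorted h2,
    sortSign_of_sorted h3, one_mul]

theorem finrank_Vsp (s t : Bool) :
    Module.finrank ℂ (Vsp (sgn s) (sgn t)) = (reps s t).card := by
  rw [(LinearEquiv.ofBijective _ ⟨restr_injective s t, restr_surjective s t⟩).finrank_eq]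
  simp

/-- The dimensions of the four sign-isotypic components of the 126-dimensional space of
quintic forms under the dihedral group `D₄` generated by `σ₁, σ₂, σ₃`. -/
theorem dims_isotypic_quintic_forms :
    Module.finrank ℂ (Vsp 1 1) = 27 ∧
    Module.finrank ℂ (Vsp (-1) 1) = 9 ∧
    Module.finrank ℂ (Vsp 1 (-1)) = 23 ∧
    Module.finrank ℂ (Vsp (-1) (-1)) = 7 :=
  ⟨(finrank_Vsp false false).trans (by decide +kernel),
    (finrank_Vsp true false).trans (by decide +kernel),
    (finrank_Vsp false true).trans (by decide +kernel),
    (finrank_Vsp true true).trans (by decide +kernel)⟩
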